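/- Let G=(V,E) be an oriented graph with |V| = n and |E| = m, and let k ≥ 2 be an integer. Suppose φ: E → Z/2 and ψ: E → Z/k are flows with supp(φ) ∪ supp(ψ) = E, and let t = |supp(φ)|. Then G has at least 2^{m − n − t/k} nowhere-zero (Z/2 × Z/k)-flows. -/

import Mathlib

open scoped Classical

/-- A multigraph with an orientation: each edge `e` has a source `src e` and a target `tgt e`.
Loops and parallel edges are allowed. -/
structure Multigraph (V E : Type) where
  src : E → V
  tgt : E → V

namespace Multigraph

variable {V E : Type}

/-- `u` and `v` are joined by some edge satisfying the predicate `P`. -/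
def adjVia (G : Multigraph V E) (P : E → Prop) (u v : V) : Prop :=
  ∃ e, P e ∧ ((G.src e = u ∧ G.tgt e = v) ∨ (G.src e = v ∧ G.tgt e = u))

/-- `v` is reachable from `u` using only edges satisfying `P`. -/
def Reaches (G : Multigraph V E) (P : E → Prop) : V → V → Prop :=
  Relation.ReflTransGen (G.adjVia P)

/-- The graph is connected when only edges satisfying `P` are kept (all edges deleted
whose predicate fails, all vertices kept). -/
def ConnectedVia (G : Multigraph V E) (P : E → Prop) : Prop :=
  Nonempty V ∧ ∀ u v : V, G.Reaches P u v

def Connected (G : Multigraph V E) : Prop :=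
  G.ConnectedVia fun _ => True

/-- `G` is `k`-edge-connected: it is connected and has no edge cut of size less than `k`;
equivalently, deleting any set of fewer than `k` edges leaves it connected. -/
def EdgeConnected (G : Multigraph V E) (k : ℕ) : Prop :=
  ∀ S : Set E, S.ncard < k → G.ConnectedVia fun e => e ∉ S

/-- The degree of a vertex (loops counted twice). -/
noncomputable def degree (G : Multigraph V E) (v : V) : ℕ :=
  {e | G.src e = v}.ncard + {e | G.tgt e = v}.ncard

/-- Every vertex has degree exactly 3. -/
def Cubic (G : Multigraph V E) : Prop :=
  ∀ v : V, G.degree v = 3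

/-- `φ : E → Γ` is a flow: at every vertex, the sum over outgoing edges equals the
sum over incoming edges. -/
def IsFlow [Fintype E] {Γ : Type} [AddCommGroup Γ] (G : Multigraph V E) (φ : E → Γ) : Prop :=
  ∀ v : V, (∑ e : E, if G.src e = v then φ e else 0) = ∑ e : E, if G.tgt e = v then φ e else 0

/-- The vertex `v` is an endpoint of some edge of `C`. -/
def touches (G : Multigraph V E) (C : Set E) (v : V) : Prop :=
  ∃ e ∈ C, G.src e = v ∨ G.tgt e = v

/-- An edge set `C` is (the edge set of) a cycle: it is nonempty, every vertex it touches
has degree exactly 2 in it, and it is connected. -/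
def IsCycle (G : Multigraph V E) (C : Set E) : Prop :=
  C.Nonempty ∧
  (∀ v : V, G.touches C v →
    ({e ∈ C | G.src e = v}.ncard + {e ∈ C | G.tgt e = v}.ncard = 2)) ∧
  (∀ u v : V, G.touches C u → G.touches C v → G.Reaches (· ∈ C) u v)

/-- `R` is `k`-closed: every cycle with at least one edge outside `R` has at least
`k+1` edges outside `R`. -/
def Closed (G : Multigraph V E) (k : ℕ) (R : Set E) : Prop :=
  ∀ C : Set E, G.IsCycle C → (C \ R).Nonempty → k + 1 ≤ (C \ R).ncard

/-- The `k`-closure `⟨S⟩ₖ` of `S` : the minimal `k`-closed set containing `S`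
(the family of `k`-closed sets is closed under intersections). -/
def kClosure (G : Multigraph V E) (k : ℕ) (S : Set E) : Set E :=
  ⋂₀ {R : Set E | S ⊆ R ∧ G.Closed k R}

/-- `S` is a `k`-base: its `k`-closure is the whole edge set. -/
def IsBase (G : Multigraph V E) (k : ℕ) (S : Set E) : Prop :=
  G.kClosure k S = Set.univ

/-- An edge set `S` is peripheral if `G − S` is connected. -/
def Peripheral (G : Multigraph V E) (S : Set E) : Prop :=
  G.ConnectedVia fun e => e ∉ S

/-- The spanning subgraph `(V, F)` is a forest, i.e. contains no cycle. -/
def IsForest (G : Multigraph V E) (F : Set E) : Prop :=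
  ∀ C : Set E, G.IsCycle C → ¬ C ⊆ F

/-- `vs`, `es` describe a path: distinct vertices `vs 0, …, vs n` and distinct edges
`es 0, …, es (n-1)` where `es i` joins `vs i` and `vs (i+1)`. -/
def IsPath (G : Multigraph V E) {n : ℕ} (vs : Fin (n + 1) → V) (es : Fin n → E) : Prop :=
  Function.Injective vs ∧ Function.Injective es ∧
  ∀ i : Fin n,
    (G.src (es i) = vs i.castSucc ∧ G.tgt (es i) = vs i.succ) ∨
    (G.src (es i) = vs i.succ ∧ G.tgt (es i) = vs i.castSucc)

/-- The edge `e` has `y` as one endpoint and its other endpoint in `X`,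
i.e. `e ∈ E(y, X)`. -/
def joins (G : Multigraph V E) (e : E) (y : V) (X : Set V) : Prop :=
  (G.src e = y ∧ G.tgt e ∈ X) ∨ (G.tgt e = y ∧ G.src e ∈ X)

/-- `W` is the vertex set of a connected component of `G − X`. -/
def IsComponent (G : Multigraph V E) (X W : Set V) : Prop :=
  W.Nonempty ∧ Disjoint W X ∧
  (∀ u ∈ W, ∀ v : V, v ∉ X → G.adjVia (fun _ => True) u v → v ∈ W) ∧
  (∀ u ∈ W, ∀ v ∈ W, G.Reaches (fun e => G.src e ∉ X ∧ G.tgt e ∉ X) u v)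

/-- The subgraph induced on `W`, with only those of its edges satisfying `P` kept,
is connected. -/
def ConnectedOn (G : Multigraph V E) (W : Set V) (P : E → Prop) : Prop :=
  ∀ u ∈ W, ∀ v ∈ W, G.Reaches (fun e => P e ∧ G.src e ∈ W ∧ G.tgt e ∈ W) u v

/-- The subgraph induced on `W` is `k`-edge-connected. -/
def EdgeConnectedOn (G : Multigraph V E) (W : Set V) (k : ℕ) : Prop :=
  ∀ S : Set E, S.ncard < k → G.ConnectedOn W fun e => e ∉ S

/-- Some cycle lies entirely inside the vertex set `X`. -/
def HasCycleIn (G : Multigraph V E) (X : Set V) : Prop :=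
  ∃ C : Set E, G.IsCycle C ∧ ∀ e ∈ C, G.src e ∈ X ∧ G.tgt e ∈ X

/-- The edge cut `E(X, V \ X)`. -/
def cutEdges (G : Multigraph V E) (X : Set V) : Set E :=
  {e | (G.src e ∈ X ∧ G.tgt e ∉ X) ∨ (G.src e ∉ X ∧ G.tgt e ∈ X)}

/-- A cubic graph is cyclically `k`-edge-connected if every edge cut separating two
cycle-containing parts has at least `k` edges. -/
def CyclicallyEdgeConnected (G : Multigraph V E) (k : ℕ) : Prop :=
  ∀ X : Set V, G.HasCycleIn X → G.HasCycleIn Xᶜ → k ≤ (G.cutEdges X).ncard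

/-- `G` is 3-connected: more than 3 vertices, connected, and still connected after
deleting any two vertices. -/
def ThreeConnected [Fintype V] (G : Multigraph V E) : Prop :=
  3 < Fintype.card V ∧ G.Connected ∧
    ∀ u v : V, G.ConnectedOn {w : V | w ≠ u ∧ w ≠ v} fun _ => True

/-- The graph `G − r` obtained by deleting the vertex `r` and all incident edges. -/
def deleteVertex (G : Multigraph V E) (r : V) :
    Multigraph {v : V // v ≠ r} {e : E // G.src e ≠ r ∧ G.tgt e ≠ r} where
  src e := ⟨G.src e.1, e.2.1⟩
  tgt e := ⟨G.tgt e.1, e.2.2⟩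

end Multigraph

namespace Multigraph

/-- Every edge set `S` with all degrees even has an Eulerian orientation. -/
lemma exists_eulerian_signs {V E : Type} (S : Finset E) (s t : E → V)
    (h : ∀ v, ∑ e ∈ S, ((if s e = v then 1 else 0) + (if t e = v then 1 else 0) : ZMod 2) = 0) :
    ∃ ε : E → ℤ, (∀ e, ε e = 1 ∨ ε e = -1) ∧
      ∀ v, ∑ e ∈ S, ε e * ((if s e = v then 1 else 0) - (if t e = v then 1 else 0)) = 0 := by
  induction hn : S.card generalizing S t with
  | zero =>
    rw [Finset.card_eq_zero] at hn
    exact ⟨fun _ => 1, fun _ => Or.inl rfl, by simp [hn]⟩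
  | succ n ih =>
    obtain ⟨a, S₁, ha, rfl, hcard⟩ := Finset.card_eq_succ.1 hn
    by_cases hloop : s a = t a
    · obtain ⟨ε, hε, hsum⟩ := ih S₁ t (fun v => by
        have := h v
        rwa [Finset.sum_insert ha, hloop, CharTwo.add_self_eq_zero, zero_add] at this) hcard
      exact ⟨ε, hε, fun v => by simp [Finset.sum_insert ha, hloop, hsum v]⟩
    -- Some other edge `b` meets the head of `a`; split off `a` and `b` there.
    obtain ⟨b, hb, hbv⟩ : ∃ b ∈ S₁, s b = t a ∨ t b = t a := by
      by_contra! hno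
      have := h (t a)
      rw [Finset.sum_insert ha,
        Finset.sum_eq_zero (fun e he => by simp [(hno e he).1, (hno e he).2])] at this
      simp [hloop] at this
    obtain ⟨T, hbT, rfl⟩ : ∃ T, b ∉ T ∧ insert b T = S₁ :=
      ⟨S₁.erase b, by simp, Finset.insert_erase hb⟩
    have hab : b ≠ a := fun hba => ha (hba ▸ hb)
    have haT : a ∉ T := fun haT => ha (Finset.mem_insert_of_mem haT)
    have hne : ∀ e ∈ T, e ≠ a := fun e he hea => haT (hea ▸ he)
    have hne' : ∀ e ∈ T, e ≠ b := fun e he hea => hbT (hea ▸ he)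
    obtain ⟨w, σ, hσ, hw2, hwZ⟩ : ∃ (w : V) (σ : ℤ), (σ = 1 ∨ σ = -1) ∧
        (∀ v, ((if w = v then 1 else 0 : ZMod 2) = (if t a = v then 1 else 0) +
          ((if s b = v then 1 else 0) + (if t b = v then 1 else 0)))) ∧
        ∀ v, (- (if w = v then 1 else 0 : ℤ) = - (if t a = v then 1 else 0) +
          σ * ((if s b = v then 1 else 0) - (if t b = v then 1 else 0))) := by
      rcases hbv with hbv | hbv
      · refine ⟨t b, 1, Or.inl rfl, fun v => ?_, fun v => ?_⟩
        · rw [hbv, ← add_assoc, CharTwo.add_self_eq_zero, zero_add]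
        · rw [hbv]; ring
      · refine ⟨s b, -1, Or.inr rfl, fun v => ?_, fun v => ?_⟩
        · rw [hbv, add_comm, add_assoc, CharTwo.add_self_eq_zero, add_zero]
        · rw [hbv]; ring
    obtain ⟨ε, hε, hsum⟩ := ih (insert a T) (Function.update t a w) (fun v => by
        have hv := h v
        rw [Finset.sum_insert ha, Finset.sum_insert hbT] at hv
        rw [Finset.sum_insert haT, Function.update_self, hw2,
          Finset.sum_congr rfl (fun e he => by rw [Function.update_of_ne (hne e he)])]
        linear_combination hv) (by
          rw [Finset.card_insert_of_notMem haT, ← hcard, Finset.card_insert_of_notMem hbT])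
    refine ⟨Function.update ε b (ε a * σ), fun e => ?_, fun v => ?_⟩
    · by_cases he : e = b
      · subst he
        rcases hε a with h1 | h1 <;> rcases hσ with h2 | h2 <;> simp [h1, h2]
      · simpa [Function.update_of_ne he] using hε e
    · have hv := hsum v
      rw [Finset.sum_insert haT, Function.update_self,
        Finset.sum_congr rfl (fun e he => by rw [Function.update_of_ne (hne e he)])] at hv
      rw [Finset.sum_insert ha, Finset.sum_insert hbT, Function.update_self,
        Function.update_of_ne hab.symm,
        Finset.sum_congr rfl (fun e he => by rw [Function.update_of_ne (hne' e he)])]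
      linear_combination hv - ε a * hwZ v

/-- The boundary homomorphism, whose kernel consists of the flows. -/
noncomputable def boundary {V E : Type} [Fintype E] (G : Multigraph V E) (Γ : Type) [AddCommGroup Γ] :
    (E → Γ) →+ (V → Γ) where
  toFun φ v := (∑ e, if G.src e = v then φ e else 0) - ∑ e, if G.tgt e = v then φ e else 0
  map_zero' := by ext; simp
  map_add' φ ψ := by
    ext v
    simp only [Pi.add_apply, ← Finset.sum_sub_distrib, ← Finset.sum_add_distrib]
    refine Finset.sum_congr rfl fun e _ => ?_
    split_ifs <;> abel

lemma isFlow_iff_boundary_eq_zero {V E : Type} [Fintype E] (G : Multigraph V E) {Γ : Type}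
    [AddCommGroup Γ] (φ : E → Γ) : G.IsFlow φ ↔ G.boundary Γ φ = 0 := by
  simp [IsFlow, boundary, funext_iff, sub_eq_zero]

lemma IsFlow.prodMk {V E : Type} [Fintype E] {G : Multigraph V E} {Γ Δ : Type}
    [AddCommGroup Γ] [AddCommGroup Δ] {φ : E → Γ} {ψ : E → Δ} (hφ : G.IsFlow φ)
    (hψ : G.IsFlow ψ) : G.IsFlow fun e => (φ e, ψ e) := by
  intro v
  ext
  · simpa [Prod.fst_sum, apply_ite Prod.fst] using hφ v
  · simpa [Prod.snd_sum, apply_ite Prod.snd] using hψ v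

/-- The support of a `ℤ₂`-flow carries a flow with values `±1` in any ring. -/
lemma IsFlow.exists_signed_flow {V E : Type} [Fintype E] {G : Multigraph V E}
    {φ : E → ZMod 2} (hφ : G.IsFlow φ) (R : Type) [Ring R] :
    ∃ χ : E → R, G.IsFlow χ ∧ (∀ e, φ e = 0 → χ e = 0) ∧
      ∀ e, φ e ≠ 0 → χ e = 1 ∨ χ e = -1 := by
  obtain ⟨ε, hε, hsum⟩ := exists_eulerian_signs ({e | φ e ≠ 0} : Finset E) G.src G.tgt (by
    intro v
    have hv := sub_eq_zero.2 (hφ v)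
    rw [CharTwo.sub_eq_add, ← Finset.sum_add_distrib] at hv
    rw [Finset.sum_filter]
    refine Eq.trans ?_ hv
    refine Finset.sum_congr rfl fun e _ => ?_
    by_cases he : φ e = 0
    · simp [he]
    · rw [if_pos he, show φ e = 1 from Fin.eq_one_of_ne_zero (φ e) he])
  refine ⟨fun e => if φ e ≠ 0 then (ε e : R) else 0, fun v => ?_,
    fun e he => by simp [he], fun e he => ?_⟩
  · have hv := congrArg (Int.cast : ℤ → R) (hsum v)
    rw [Finset.sum_filter] at hv
    push_cast at hv
    rw [← sub_eq_zero, ← Finset.sum_sub_distrib]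
    refine Eq.trans ?_ hv
    refine Finset.sum_congr rfl fun e _ => ?_
    by_cases he : φ e = 0
    · simp [he]
    · simp only [ne_eq, he, not_false_eq_true, if_true]
      split_ifs <;> simp
  · rcases hε e with h | h <;> simp [he, h]

/-- Flows in a finite group `Γ` vanishing on an edge set `Z` number at least
`|Γ|^(m - n - |Z|)`. -/
lemma card_pow_le_card_flows_vanishing_on {V E : Type} [Fintype V] [Fintype E]
    (G : Multigraph V E) (Γ : Type) [AddCommGroup Γ] [Fintype Γ] (Z : Finset E) :
    Fintype.card Γ ^ Fintype.card E ≤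
      Nat.card {x : E → Γ // G.IsFlow x ∧ ∀ e ∈ Z, x e = 0} *
        Fintype.card Γ ^ (Fintype.card V + Z.card) := by
  let restrict : (E → Γ) →+ (Z → Γ) :=
    { toFun := fun x e => x e, map_zero' := rfl, map_add' := fun _ _ => rfl }
  let L := (G.boundary Γ).prod restrict
  have hker : Nat.card {x : E → Γ // G.IsFlow x ∧ ∀ e ∈ Z, x e = 0} = Nat.card L.ker := by
    refine Nat.card_congr (Equiv.subtypeEquivRight fun x => ?_)
    simp [L, restrict, AddMonoidHom.mem_ker, isFlow_iff_boundary_eq_zero, funext_iff]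
  have hcard := L.ker.card_mul_index
  rw [AddSubgroup.index_ker] at hcard
  have hrange : Nat.card L.range ≤ Nat.card ((V → Γ) × (Z → Γ)) :=
    Finite.card_subtype_le _
  calc Fintype.card Γ ^ Fintype.card E = Nat.card (E → Γ) := by simp
    _ = _ := hcard.symm
    _ ≤ Nat.card L.ker * Nat.card ((V → Γ) × (Z → Γ)) := Nat.mul_le_mul_left _ hrange
    _ = _ := by rw [hker]; simp [pow_add]

/-- A `ℤ_k`-flow can be shifted along the support of a `ℤ₂`-flow so that it vanishes on at most
a `1/k` fraction of that support, and keeps its values elsewhere. -/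
lemma exists_flow_with_few_zeros {V E : Type} [Fintype E] {G : Multigraph V E} {k : ℕ} [NeZero k]
    {φ : E → ZMod 2} {ψ : E → ZMod k} (hφ : G.IsFlow φ) (hψ : G.IsFlow ψ) :
    ∃ ψ' : E → ZMod k, G.IsFlow ψ' ∧ (∀ e, φ e = 0 → ψ' e = ψ e) ∧
      k * ({e | φ e ≠ 0 ∧ ψ' e = 0} : Finset E).card ≤ ({e | φ e ≠ 0} : Finset E).card := by
  obtain ⟨χ, hχ, hχ0, hχ1⟩ := hφ.exists_signed_flow (ZMod k)
  let Z (a : ZMod k) : Finset E := {e | φ e ≠ 0 ∧ ψ e + a * χ e = 0}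
  have hunique : ∀ e, φ e ≠ 0 → ({a | ψ e + a * χ e = 0} : Finset (ZMod k)).card = 1 := by
    intro e he
    rw [Finset.card_eq_one]
    rcases hχ1 e he with h | h
    · refine ⟨-ψ e, ?_⟩
      ext a
      simp [h, eq_neg_iff_add_eq_zero, add_comm]
    · refine ⟨ψ e, ?_⟩
      ext a
      simp [h, ← sub_eq_add_neg, sub_eq_zero, eq_comm]
  have hcount : ∑ a, (Z a).card = ({e | φ e ≠ 0} : Finset E).card := by
    have := Finset.sum_card_bipartiteAbove_eq_sum_card_bipartiteBelow
      (s := (Finset.univ : Finset (ZMod k))) (t := ({e | φ e ≠ 0} : Finset E))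
      (fun a e => ψ e + a * χ e = 0)
    simp only [Finset.bipartiteAbove, Finset.bipartiteBelow, Finset.filter_filter] at this
    rw [this, Finset.sum_congr rfl fun e he => hunique e (Finset.mem_filter.1 he).2]
    simp
  obtain ⟨a, -, ha⟩ := Finset.exists_min_image Finset.univ (fun a => (Z a).card)
    Finset.univ_nonempty
  refine ⟨fun e => ψ e + a * χ e, fun v => ?_, fun e he => by simp [hχ0 e he], ?_⟩
  · have h := congrArg₂ (fun x y => x + a * y) (hψ v) (hχ v)
    simpa only [Finset.mul_sum, mul_ite, mul_zero, ← Finset.sum_add_distrib,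
      ← apply_ite, ite_add_ite, add_zero] using h
  · rw [← hcount]
    simpa using Finset.card_nsmul_le_sum Finset.univ (fun a => (Z a).card) _ ha

end Multigraph

/-- If `φ : E → ℤ₂` and `ψ : E → ℤ_k` are flows whose supports cover `E`, and
`t = |supp(φ)|`, then `G` has at least `2^(m - n - t/k)` nowhere-zero
`ℤ₂ × ℤ_k`-flows. -/
theorem many_nowhere_zero_flows_from_covering_supports {V E : Type} [Fintype V] [Fintype E]
    (G : Multigraph V E) (k : ℕ) (hk : 2 ≤ k)
    (φ : E → ZMod 2) (ψ : E → ZMod k) (hφ : G.IsFlow φ) (hψ : G.IsFlow ψ)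
    (hcover : ∀ e : E, φ e ≠ 0 ∨ ψ e ≠ 0)
    (t : ℕ) (ht : t = {e : E | φ e ≠ 0}.ncard) :
    (2 : ℝ) ^ ((Fintype.card E : ℝ) - (Fintype.card V : ℝ) - (t : ℝ) / (k : ℝ)) ≤
      Nat.card {θ : E → ZMod 2 × ZMod k // G.IsFlow θ ∧ ∀ e : E, θ e ≠ 0} := by
  have : NeZero k := ⟨by omega⟩
  obtain ⟨ψ', hψ', hagree, hfew⟩ := Multigraph.exists_flow_with_few_zeros hφ hψ
  set Z : Finset E := {e | φ e ≠ 0 ∧ ψ' e = 0} with hZ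
  have htZ : (Z.card : ℝ) ≤ (t : ℝ) / k := by
    rw [le_div_iff₀ (by exact_mod_cast (by omega : 0 < k)), ht, Set.ncard_eq_toFinset_card']
    rw [mul_comm]
    simp only [Set.toFinset_ofPred]
    exact_mod_cast hfew
  have hinj : Nat.card {x : E → ZMod 2 // G.IsFlow x ∧ ∀ e ∈ Z, x e = 0} ≤
      Nat.card {θ : E → ZMod 2 × ZMod k // G.IsFlow θ ∧ ∀ e : E, θ e ≠ 0} := by
    refine Nat.card_le_card_of_injective (fun x => ⟨fun e => (φ e + x.1 e, ψ' e), ?_, ?_⟩) ?_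
    · refine Multigraph.IsFlow.prodMk ?_ hψ'
      refine (G.isFlow_iff_boundary_eq_zero (φ + x.1)).2 ?_
      rw [map_add, (G.isFlow_iff_boundary_eq_zero φ).1 hφ,
        (G.isFlow_iff_boundary_eq_zero x.1).1 x.2.1, add_zero]
    · intro e he
      obtain ⟨h1, h2⟩ := Prod.mk_eq_zero.1 he
      by_cases hφe : φ e = 0
      · exact (hcover e).elim (· hφe) (· (hagree e hφe ▸ h2))
      · rw [x.2.2 e (by simp [hZ, hφe, h2]), add_zero] at h1
        exact hφe h1
    · intro x y hxy
      ext1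
      funext e
      simpa using congrArg Prod.fst (congrFun (congrArg Subtype.val hxy) e)
  have hflows := G.card_pow_le_card_flows_vanishing_on (ZMod 2) Z
  rw [ZMod.card] at hflows
  have hreal : (2 : ℝ) ^ Fintype.card E ≤
      Nat.card {θ : E → ZMod 2 × ZMod k // G.IsFlow θ ∧ ∀ e : E, θ e ≠ 0} *
        2 ^ (Fintype.card V + Z.card) := by
    exact_mod_cast hflows.trans (Nat.mul_le_mul_right _ hinj)
  calc (2 : ℝ) ^ ((Fintype.card E : ℝ) - (Fintype.card V : ℝ) - (t : ℝ) / (k : ℝ))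
      ≤ 2 ^ ((Fintype.card E : ℝ) - ((Fintype.card V + Z.card : ℕ) : ℝ)) :=
        Real.rpow_le_rpow_of_exponent_le one_le_two (by push_cast; linarith)
    _ = 2 ^ Fintype.card E / 2 ^ (Fintype.card V + Z.card) := by
        rw [Real.rpow_sub two_pos, Real.rpow_natCast, Real.rpow_natCast]
    _ ≤ _ := (div_le_iff₀ (by positivity)).2 hreal
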